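/- Thompson's group F is boundedly acyclic. -/

import Mathlib

open scoped BigOperators

/-- A cochain (function into a normed space) is bounded if its norms are uniformly bounded. -/
def IsBddCochain {G : Type*} {E : Type*} [NormedAddCommGroup E] {n : ℕ}
    (f : (Fin n → G) → E) : Prop :=
  ∃ C : ℝ, ∀ g, ‖f g‖ ≤ C

/-- The inhomogeneous coboundary operator of bounded cohomology, for an action `π` of
`G` on `E`:
`(δf)(g₁,…,g_{n+1}) = g₁•f(g₂,…,g_{n+1}) + ∑_{i=1}^{n} (−1)^i f(g₁,…,g_i·g_{i+1},…,g_{n+1})`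
`+ (−1)^{n+1} f(g₁,…,g_n)`. -/
def bddDelta {G : Type*} [Group G] {E : Type*} [NormedAddCommGroup E] [Module ℝ E]
    (π : G → E → E) (n : ℕ) (f : (Fin n → G) → E) : (Fin (n + 1) → G) → E :=
  fun g =>
    π (g 0) (f (fun j => g j.succ)) +
    (∑ i : Fin n, ((-1 : ℝ) ^ ((i : ℕ) + 1)) •
      f (fun j => if (j : ℕ) < (i : ℕ) then g (Fin.castSucc j)
        else if (j : ℕ) = (i : ℕ) then g (Fin.castSucc j) * g j.succ
        else g j.succ)) +
    ((-1 : ℝ) ^ (n + 1)) • f (fun j => g (Fin.castSucc j))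

/-- Vanishing of the bounded cohomology `Hb^n(G,E)` for all `n ≥ 1`, with respect to the
`G`-action `π` on `E`: every bounded cocycle of degree `n ≥ 1` is the coboundary of a
bounded cochain. -/
def HbVanish {G : Type*} [Group G] {E : Type*} [NormedAddCommGroup E] [Module ℝ E]
    (π : G → E → E) : Prop :=
  ∀ (n : ℕ) (f : (Fin (n + 1) → G) → E), IsBddCochain f →
    bddDelta π (n + 1) f = 0 →
    ∃ b : (Fin n → G) → E, IsBddCochain b ∧ bddDelta π n b = f

/-- A group is boundedly acyclic if `Hb^n(G,ℝ) = 0` for all `n ≥ 1`, where `ℝ` carries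
the trivial `G`-action. -/
def BoundedlyAcyclic (G : Type*) [Group G] : Prop :=
  HbVanish (G := G) (E := ℝ) (fun _ v => v)

/-- A real number is a dyadic rational if it is of the form `a / 2 ^ b` with `a`, `b`
integers. -/
def IsDyadic (r : ℝ) : Prop := ∃ (a : ℤ) (b : ℕ), r = a / 2 ^ b

/-- A permutation of `[0,1]` belongs to Thompson's group `F` iff it is an increasing
bijection which is piecewise affine with finitely many breakpoints, all breakpoints
being dyadic rationals and all slopes being integer powers of `2`.  (Such a map is
automatically a homeomorphism of `[0,1]`.) -/
def IsThompson (f : Equiv.Perm ↥(Set.Icc (0 : ℝ) 1)) : Prop :=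
  StrictMono (fun x => (f x : ℝ)) ∧
  ∃ s : Finset ℝ, (∀ q ∈ s, IsDyadic q) ∧
    ∀ x y : ↥(Set.Icc (0 : ℝ) 1), (x : ℝ) ≤ y →
      (∀ q ∈ s, q ∉ Set.Ioo (x : ℝ) (y : ℝ)) →
      ∃ m : ℤ, ∀ t : ↥(Set.Icc (0 : ℝ) 1), (t : ℝ) ∈ Set.Icc (x : ℝ) (y : ℝ) →
        (f t : ℝ) = (f x : ℝ) + (2 : ℝ) ^ m * ((t : ℝ) - (x : ℝ))

/-!
Homogeneous cochains are functions on lists of group elements. Pulling a cocycle back along an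
equivariant random self-map of the group, drawn independently at each vertex, does not change its
bounded cohomology class: the prism operator is an explicit chain homotopy, and it preserves
invariance.

Let `G` be a subgroup whose conjugates by the powers of an element `t` commute with it, and let `p`
be a `G`-equivariant map from the group to `G`. For each position `a`, the map which writes `p x`
into the `a`-th factor of a random product of such conjugates is `G`-equivariant up to conjugation
by `t ^ a`. Averaging the cocycle over long intervals of powers of `t` first makes this conjugation
negligible, and by the weak law of large numbers the average over many positions hardly depends on
the values `p x`. Hence coning off the averaged pullback gives uniformly bounded primitives which
are invariant under `G` in the limit.

Compactness of the space of primitives with a given bound glues these limits to one primitive that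
is invariant under the commutator subgroup. As the abelianization is amenable, averaging makes it
invariant under the whole group.

In Thompson's group, germs at an endpoint of `[0, 1]` are linear, so they commute, and each
commutator is the identity near both endpoints. Finitely many commutators are thus supported in a
common `(a, b)`, and a high power of the generator `A`, which pushes every interior point towards
`0`, maps `(a, b)` and all its further images off `(a, b)`.
-/

namespace BoundedCohomology

open Filter Topology

section Complex
variable {X Y : Type*}

/-- The alternating-sum coboundary `∑ (-1)^i c (x₀, …, x̂ᵢ, …, xₙ)` of the simplicial cochain
complex of `X`. Simplices of all dimensions are lists of vertices, and all degrees are treated at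
once; the empty list is the `(-1)`-simplex. -/
def coboundary : (List X → ℝ) → List X → ℝ
  | _, [] => 0
  | c, x :: L => c L - coboundary (fun M => c (x :: M)) L

lemma coboundary_sub (c d : List X → ℝ) : coboundary (c - d) = coboundary c - coboundary d := by
  funext L
  induction L generalizing c d with
  | nil => simp [coboundary]
  | cons x L ih =>
    have hcons := ih (fun M => c (x :: M)) (fun M => d (x :: M))
    simp only [coboundary, Pi.sub_apply, Pi.sub_def] at hcons ⊢
    rw [hcons]
    ring

lemma coboundary_expect {Ω : Type*} [Fintype Ω] (c : Ω → List X → ℝ) :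
    coboundary (fun L => 𝔼 ω, c ω L) = fun L => 𝔼 ω, coboundary (c ω) L := by
  funext L
  induction L generalizing c with
  | nil => simp [coboundary]
  | cons x L ih => simp only [coboundary, ih, Finset.expect_sub_distrib]

lemma coboundary_comp_map (σ : X → Y) (c : List Y → ℝ) :
    coboundary (fun L => c (L.map σ)) = fun L => coboundary c (L.map σ) := by
  funext L
  induction L generalizing c with
  | nil => simp [coboundary]
  | cons x L ih => simp only [coboundary, List.map_cons, ih fun M => c (σ x :: M)]

lemma coboundary_ofFn {n : ℕ} (c : List X → ℝ) (x : Fin (n + 1) → X) :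
    coboundary c (List.ofFn x) =
      ∑ k : Fin (n + 1), (-1 : ℝ) ^ (k : ℕ) * c (List.ofFn (x ∘ k.succAbove)) := by
  induction n generalizing c with
  | zero => simp [coboundary]
  | succ n ih =>
    rw [List.ofFn_succ, coboundary, ih, Fin.sum_univ_succ (n := n + 1), sub_eq_add_neg,
      ← Finset.sum_neg_distrib]
    simp [pow_succ, Function.comp_def]

lemma continuous_coboundary : Continuous (coboundary : (List X → ℝ) → List X → ℝ) := by
  refine continuous_pi fun L => ?_
  induction L with
  | nil => exact continuous_const
  | cons x L ih =>
    exact (continuous_apply L).sub (ih.comp (continuous_pi fun M => continuous_apply (x :: M)))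

end Complex

lemma abs_expect_le_of_forall {Ω : Type*} [Fintype Ω] [Nonempty Ω] {φ : Ω → ℝ} {C : ℝ}
    (h : ∀ ω, |φ ω| ≤ C) : |𝔼 ω, φ ω| ≤ C :=
  (Finset.abs_expect_le _ _).trans (Finset.expect_le Finset.univ_nonempty fun ω _ => h ω)

section RandomMap
variable {X Y Ω : Type*} [Fintype Ω]

/-- The pullback of a cochain along a random map `Q`, uniformly distributed over `Ω`:
the expectation of `c (Q x₀, …, Q xₙ)` where an independent copy of `Q` is drawn for each
vertex. -/
noncomputable def randomPullback (Q : Ω → X → Y) : (List Y → ℝ) → List X → ℝ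
  | c, [] => c []
  | c, x :: L => 𝔼 ω, randomPullback Q (fun M => c (Q ω x :: M)) L

lemma randomPullback_sub (Q : Ω → X → Y) (c d : List Y → ℝ) :
    randomPullback Q (c - d) = randomPullback Q c - randomPullback Q d := by
  funext L
  induction L generalizing c d with
  | nil => simp [randomPullback]
  | cons x L ih =>
    have hcons (ω : Ω) := ih (fun M => c (Q ω x :: M)) (fun M => d (Q ω x :: M))
    simp only [randomPullback, Pi.sub_apply, Pi.sub_def] at hcons ⊢
    simp only [hcons, Finset.expect_sub_distrib]

lemma randomPullback_zero (Q : Ω → X → Y) : randomPullback Q 0 = 0 := by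
  simpa using randomPullback_sub Q 0 0

lemma coboundary_randomPullback [Nonempty Ω] (Q : Ω → X → Y) (c : List Y → ℝ) :
    coboundary (randomPullback Q c) = randomPullback Q (coboundary c) := by
  funext L
  induction L generalizing c with
  | nil => simp [coboundary, randomPullback]
  | cons x L ih =>
    have hcons (ω : Ω) : randomPullback Q (fun M => coboundary c (Q ω x :: M)) L =
        randomPullback Q c L - randomPullback Q (coboundary fun M => c (Q ω x :: M)) L :=
      congrFun (randomPullback_sub Q c (coboundary fun M => c (Q ω x :: M))) L
    rw [randomPullback, Finset.expect_congr rfl fun ω _ => hcons ω, Finset.expect_sub_distrib,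
      Fintype.expect_const]
    simp only [coboundary, randomPullback, coboundary_expect, ih]

lemma abs_randomPullback_le [Nonempty Ω] (Q : Ω → X → Y) {c : List Y → ℝ} {C : ℝ}
    (hc : ∀ L, |c L| ≤ C) (L : List X) : |randomPullback Q c L| ≤ C := by
  induction L generalizing c with
  | nil => exact hc _
  | cons x L ih => exact abs_expect_le_of_forall fun ω => ih fun M => hc _

lemma randomPullback_map {X' Y' : Type*} {Q : Ω → X → Y} {Q' : Ω → X' → Y'} {σ : X → X'}
    {τ : Y → Y'} (h : ∀ ω x, Q' ω (σ x) = τ (Q ω x)) (c : List Y' → ℝ) (L : List X) :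
    randomPullback Q' c (L.map σ) = randomPullback Q (fun M => c (M.map τ)) L := by
  induction L generalizing c with
  | nil => simp [randomPullback]
  | cons x L ih => simp only [randomPullback, List.map_cons, h, ih]

lemma randomPullback_ofFn {n : ℕ} (Q : Ω → X → Y) (c : List Y → ℝ) (x : Fin n → X) :
    randomPullback Q c (List.ofFn x) =
      𝔼 ω : Fin n → Ω, c (List.ofFn fun j => Q (ω j) (x j)) := by
  induction n generalizing c with
  | zero => simp [randomPullback]
  | succ n ih =>
    rw [List.ofFn_succ, randomPullback,
      ← Fintype.expect_equiv (Fin.consEquiv fun _ => Ω)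
        (fun ω => c (List.ofFn fun j => Q (Fin.consEquiv (fun _ => Ω) ω j) (x j))) _ fun _ => rfl,
      ← Finset.univ_product_univ, Finset.expect_product]
    simp [ih, Fin.consEquiv, List.ofFn_succ]

/-- The prism operator: a chain homotopy from the identity to `randomPullback Q`. -/
noncomputable def prism (Q : Ω → X → X) : (List X → ℝ) → List X → ℝ
  | _, [] => 0
  | c, x :: L =>
      randomPullback Q (fun M => c (x :: M)) (x :: L) - prism Q (fun M => c (x :: M)) L

lemma prism_sub (Q : Ω → X → X) (c d : List X → ℝ) :
    prism Q (c - d) = prism Q c - prism Q d := by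
  funext L
  induction L generalizing c d with
  | nil => simp [prism]
  | cons x L ih =>
    have hcons := ih (fun M => c (x :: M)) (fun M => d (x :: M))
    have hpullback :=
      congrFun (randomPullback_sub Q (fun M => c (x :: M)) (fun M => d (x :: M))) (x :: L)
    simp only [prism, Pi.sub_apply, Pi.sub_def] at hcons hpullback ⊢
    rw [hcons, hpullback]
    ring

lemma prism_zero (Q : Ω → X → X) : prism Q 0 = 0 := by
  simpa using prism_sub Q 0 0

lemma coboundary_prism_add_prism_coboundary [Nonempty Ω] (Q : Ω → X → X) (c : List X → ℝ) :
    coboundary (prism Q c) + prism Q (coboundary c) = randomPullback Q c - c := by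
  funext L
  induction L generalizing c with
  | nil => simp [coboundary, prism, randomPullback]
  | cons x L ih =>
    let c' : List X → ℝ := fun M => c (x :: M)
    have hprism : coboundary (prism Q c) (x :: L) = prism Q c L -
        (coboundary (fun M => randomPullback Q c' (x :: M)) L - coboundary (prism Q c') L) := by
      rw [← Pi.sub_apply, ← coboundary_sub]
      rfl
    have hpullback : coboundary (fun M => randomPullback Q c' (x :: M)) L =
        randomPullback Q c' L - randomPullback Q (coboundary c') (x :: L) := by
      rw [← coboundary_randomPullback, coboundary, sub_sub_cancel]
    have hcoboundary : prism Q (coboundary c) (x :: L) = randomPullback Q c (x :: L) -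
        randomPullback Q (coboundary c') (x :: L) - (prism Q c L - prism Q (coboundary c') L) := by
      rw [← Pi.sub_apply, ← randomPullback_sub, ← Pi.sub_apply (prism Q c), ← prism_sub]
      rfl
    have hih : coboundary (prism Q c') L + prism Q (coboundary c') L =
        randomPullback Q c' L - c (x :: L) := ih c'
    simp only [Pi.add_apply, Pi.sub_apply]
    linarith

lemma abs_prism_le [Nonempty Ω] (Q : Ω → X → X) {c : List X → ℝ} {C : ℝ}
    (hc : ∀ L, |c L| ≤ C) (L : List X) : |prism Q c L| ≤ L.length * C := by
  induction L generalizing c with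
  | nil => simp [prism]
  | cons x L ih =>
    calc |prism Q c (x :: L)| ≤ |randomPullback Q (fun M => c (x :: M)) (x :: L)| +
          |prism Q (fun M => c (x :: M)) L| := abs_sub _ _
      _ ≤ C + L.length * C :=
          add_le_add (abs_randomPullback_le Q (fun M => hc _) _) (ih fun M => hc _)
      _ = (x :: L).length * C := by push_cast [List.length_cons]; ring

lemma prism_map {Y : Type*} {Q : Ω → X → X} {Q' : Ω → Y → Y} {σ : X → Y}
    (h : ∀ ω x, Q' ω (σ x) = σ (Q ω x)) (c : List Y → ℝ) (L : List X) :
    prism Q' c (L.map σ) = prism Q (fun M => c (M.map σ)) L := by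
  induction L generalizing c with
  | nil => simp [prism]
  | cons x L ih =>
    simp only [prism, List.map_cons, ih, ← randomPullback_map h (fun M => c (σ x :: M))]

end RandomMap

section Primitive
variable {X : Type*}

/-- `b` is a primitive of the cochain `c` which is bounded in each degree, by `B n` on lists of
length `n`. -/
structure IsBddPrimitive (c : List X → ℝ) (B : ℕ → ℝ) (b : List X → ℝ) : Prop where
  coboundary_eq : coboundary b = c
  abs_le (L : List X) : |b L| ≤ B L.length

lemma isCompact_setOf_isBddPrimitive (c : List X → ℝ) (B : ℕ → ℝ) :
    IsCompact {b | IsBddPrimitive c B b} := by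
  have hset : {b | IsBddPrimitive c B b} =
      (Set.univ.pi fun L => Set.Icc (-B L.length) (B L.length)) ∩ coboundary ⁻¹' {c} := by
    ext b
    simp only [Set.mem_ofPred_eq, Set.mem_inter_iff, Set.mem_univ_pi, Set.mem_Icc, ← abs_le,
      Set.mem_preimage, Set.mem_singleton_iff]
    exact ⟨fun h => ⟨h.abs_le, h.coboundary_eq⟩, fun h => ⟨h.2, h.1⟩⟩
  rw [hset]
  exact (isCompact_univ_pi fun L => isCompact_Icc).inter_right
    (isClosed_singleton.preimage continuous_coboundary)

lemma exists_isBddPrimitive_limit {ι : Type*} {l : Filter ι} [l.NeBot] {c : List X → ℝ}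
    {B : ℕ → ℝ} {b : ι → List X → ℝ} (hb : ∀ i, IsBddPrimitive c B (b i)) :
    ∃ b₀, IsBddPrimitive c B b₀ ∧
      ∀ L L', Tendsto (fun i => b i L' - b i L) l (𝓝 0) → b₀ L' = b₀ L := by
  let U : Ultrafilter ι := Ultrafilter.of l
  obtain ⟨b₀, hb₀, hlim⟩ := (isCompact_setOf_isBddPrimitive c B).ultrafilter_le_nhds (U.map b)
    (tendsto_principal.2 (Eventually.of_forall hb))
  have hlim' (L : List X) : Tendsto (fun i => b i L) U (𝓝 (b₀ L)) :=
    tendsto_pi_nhds.1 hlim L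
  refine ⟨b₀, hb₀, fun L L' hL => ?_⟩
  exact sub_eq_zero.1 <| tendsto_nhds_unique ((hlim' L').sub (hlim' L))
    (hL.mono_left (Ultrafilter.of_le l))

lemma IsBddPrimitive.expect {Ω : Type*} [Fintype Ω] [Nonempty Ω] {c : List X → ℝ} {B : ℕ → ℝ}
    {b : Ω → List X → ℝ} (hb : ∀ ω, IsBddPrimitive c B (b ω)) :
    IsBddPrimitive c B fun L => 𝔼 ω, b ω L where
  coboundary_eq := by
    simp only [coboundary_expect, (hb _).coboundary_eq, Fintype.expect_const]
  abs_le L := abs_expect_le_of_forall fun ω => (hb ω).abs_le L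

lemma IsBddPrimitive.sub_prism {Ω : Type*} [Fintype Ω] [Nonempty Ω] {Q : Ω → X → X}
    {b c : List X → ℝ} {B : ℕ → ℝ} {C : ℝ} (hc : coboundary c = 0) (hC : ∀ L, |c L| ≤ C)
    (hb : IsBddPrimitive (randomPullback Q c) B b) :
    IsBddPrimitive c (fun n => B n + n * C) (b - prism Q c) where
  coboundary_eq := by
    have hhomotopy := coboundary_prism_add_prism_coboundary Q c
    rw [hc, prism_zero, add_zero] at hhomotopy
    rw [coboundary_sub, hb.coboundary_eq, hhomotopy, sub_sub_cancel]
  abs_le L := (abs_sub _ _).trans (add_le_add (hb.abs_le L) (abs_prism_le Q hC L))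

lemma isBddPrimitive_cone {c : List X → ℝ} {C : ℝ} (hc : coboundary c = 0)
    (hC : ∀ L, |c L| ≤ C) (x : X) : IsBddPrimitive c (fun _ => C) fun L => c (x :: L) where
  coboundary_eq := by
    funext L
    exact (sub_eq_zero.1 (congrFun hc (x :: L))).symm
  abs_le L := hC _

variable {Γ : Type*} [Group Γ] [MulAction Γ X]

variable (Γ) in
/-- The subgroup of all elements of `Γ` which leave the cochain `c` invariant. -/
def invarianceSubgroup (c : List X → ℝ) : Subgroup Γ where
  carrier := {g | ∀ L, c (L.map (g • ·)) = c L}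
  one_mem' L := by simp
  mul_mem' {g h} hg hh L := by
    rw [← hh L, ← hg (L.map (h • ·)), List.map_map]
    simp only [Function.comp_def, mul_smul]
  inv_mem' {g} hg L := by
    rw [← hg, List.map_map]
    simp [Function.comp_def]

lemma mem_invarianceSubgroup {c : List X → ℝ} {g : Γ} :
    g ∈ invarianceSubgroup Γ c ↔ ∀ L, c (L.map (g • ·)) = c L :=
  Iff.rfl

lemma IsBddPrimitive.comp_map {c : List X → ℝ} {B : ℕ → ℝ} {b : List X → ℝ}
    (hb : IsBddPrimitive c B b) {g : Γ} (hg : g ∈ invarianceSubgroup Γ c) :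
    IsBddPrimitive c B fun L => b (L.map (g • ·)) where
  coboundary_eq := by
    rw [coboundary_comp_map, hb.coboundary_eq]
    exact funext hg
  abs_le L := by simpa using hb.abs_le (L.map (g • ·))

lemma exists_isBddPrimitive_le_invarianceSubgroup {c : List X → ℝ} {B : ℕ → ℝ}
    {Λ : Subgroup Γ} (h : ∀ (J : Finset Γ) (T : Finset (List X)), (∀ g ∈ J, g ∈ Λ) →
      ∃ b, IsBddPrimitive c B b ∧ ∀ g ∈ J, ∀ L ∈ T, b (L.map (g • ·)) = b L) :
    ∃ b, IsBddPrimitive c B b ∧ Λ ≤ invarianceSubgroup Γ b := by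
  classical
  have h' (q : Finset Λ × Finset (List X)) := h (q.1.image (↑)) q.2 (by simp +contextual)
  choose b hb hinv using h'
  obtain ⟨b₀, hb₀, hlim⟩ := exists_isBddPrimitive_limit (l := atTop) hb
  refine ⟨b₀, hb₀, fun g hg L => hlim _ _ (tendsto_const_nhds.congr' ?_)⟩
  filter_upwards [eventually_ge_atTop (({⟨g, hg⟩}, {L}) : Finset Λ × Finset (List X))] with q hq
  have hgq : g ∈ q.1.image ((↑) : Λ → Γ) :=
    Finset.mem_image_of_mem _ (hq.1 (Finset.mem_singleton_self (⟨g, hg⟩ : Λ)))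
  rw [hinv q g hgq L (hq.2 (Finset.mem_singleton_self L)), sub_self]

lemma mem_invarianceSubgroup_randomPullback {Ω : Type*} [Fintype Ω] {Q : Ω → X → X}
    {c : List X → ℝ} {g : Γ} (hQ : ∀ ω x, Q ω (g • x) = g • Q ω x)
    (hg : g ∈ invarianceSubgroup Γ c) : g ∈ invarianceSubgroup Γ (randomPullback Q c) := fun L => by
  rw [randomPullback_map hQ, funext (mem_invarianceSubgroup.1 hg)]

lemma mem_invarianceSubgroup_prism {Ω : Type*} [Fintype Ω] {Q : Ω → X → X}
    {c : List X → ℝ} {g : Γ} (hQ : ∀ ω x, Q ω (g • x) = g • Q ω x)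
    (hg : g ∈ invarianceSubgroup Γ c) : g ∈ invarianceSubgroup Γ (prism Q c) := fun L => by
  rw [prism_map hQ, funext (mem_invarianceSubgroup.1 hg)]

lemma abs_expect_shift_sub_le {φ : ℕ → ℝ} {C : ℝ} (hφ : ∀ k, |φ k| ≤ C) (K a : ℕ) :
    |𝔼 k : Fin K, φ (k + a) - 𝔼 k : Fin K, φ k| ≤ a * (2 * C / K) := by
  have htelescope : ∑ k ∈ Finset.range K, φ (k + a) - ∑ k ∈ Finset.range K, φ k =
      ∑ k ∈ Finset.range a, (φ (K + k) - φ k) := by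
    have h₁ := Finset.sum_range_add φ K a
    have h₂ := Finset.sum_range_add φ a K
    rw [add_comm a K] at h₂
    simp only [add_comm _ a, Finset.sum_sub_distrib]
    linarith
  have hterm : ∀ k ∈ Finset.range a, |φ (K + k) - φ k| ≤ 2 * C := fun k _ =>
    (abs_sub _ _).trans (by linarith [hφ (K + k), hφ k])
  rw [Fintype.expect_eq_sum_div_card, Fintype.expect_eq_sum_div_card, ← sub_div,
    Fin.sum_univ_eq_sum_range (fun k => φ (k + a)), Fin.sum_univ_eq_sum_range, htelescope,
    Fintype.card_fin, abs_div, Nat.abs_cast, ← mul_div_assoc]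
  gcongr
  calc |∑ k ∈ Finset.range a, (φ (K + k) - φ k)| ≤ ∑ k ∈ Finset.range a, |φ (K + k) - φ k| :=
        Finset.abs_sum_le_sum_abs _ _
    _ ≤ a * (2 * C) := by simpa using Finset.sum_le_card_nsmul _ _ _ hterm

/-- Averaging over the translates by `1, u, …, uᴷ` and letting `K → ∞` adds `u` to the elements
which leave a primitive invariant. -/
lemma IsBddPrimitive.exists_mem_invarianceSubgroup {c : List X → ℝ} {B : ℕ → ℝ}
    {b : List X → ℝ} (hb : IsBddPrimitive c B b) {u : Γ} (huc : u ∈ invarianceSubgroup Γ c)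
    (hub : u ∈ Subgroup.normalizer (invarianceSubgroup Γ b : Set Γ)) :
    ∃ b', IsBddPrimitive c B b' ∧ invarianceSubgroup Γ b ≤ invarianceSubgroup Γ b' ∧
      u ∈ invarianceSubgroup Γ b' := by
  let avg (K : ℕ) (L : List X) : ℝ := 𝔼 k : Fin (K + 1), b (L.map (u ^ (k : ℕ) • ·))
  have havg (K : ℕ) : IsBddPrimitive c B (avg K) :=
    .expect fun k => hb.comp_map (pow_mem huc (k : ℕ))
  have hinv {g : Γ} (hg : g ∈ invarianceSubgroup Γ b) (K : ℕ) (L : List X) :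
      avg K (L.map (g • ·)) = avg K L := by
    refine Finset.expect_congr rfl fun k _ => ?_
    have hconj := (Subgroup.mem_normalizer_iff.1 (pow_mem hub k) g).1 hg
    rw [← hconj (L.map _), List.map_map, List.map_map]
    simp [Function.comp_def, smul_smul]
  have hshift (K : ℕ) (L : List X) :
      |avg K (L.map (u • ·)) - avg K L| ≤ 2 * B L.length / (K + 1 : ℕ) := by
    have h := abs_expect_shift_sub_le (φ := fun k => b (L.map (u ^ k • ·))) (C := B L.length)
      (fun k => by simpa using hb.abs_le (L.map (u ^ k • ·))) (K + 1) 1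
    simpa [avg, pow_succ, mul_smul, Function.comp_def] using h
  obtain ⟨b', hb', hlim⟩ := exists_isBddPrimitive_limit (l := atTop) havg
  refine ⟨b', hb', fun g hg L => hlim _ _ ?_, fun L => hlim _ _ ?_⟩
  · simp [hinv hg]
  · exact squeeze_zero_norm (hshift · L)
      ((tendsto_const_div_atTop_nhds_zero_nat _).comp (tendsto_add_atTop_nat 1))

lemma exists_isBddPrimitive_invarianceSubgroup_eq_top {c : List X → ℝ} {B : ℕ → ℝ}
    {b : List X → ℝ} (hc : invarianceSubgroup Γ c = ⊤) (hb : IsBddPrimitive c B b)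
    (hcomm : commutator Γ ≤ invarianceSubgroup Γ b) :
    ∃ b', IsBddPrimitive c B b' ∧ invarianceSubgroup Γ b' = ⊤ := by
  classical
  have hfinite (J : Finset Γ) : ∃ b', IsBddPrimitive c B b' ∧
      commutator Γ ≤ invarianceSubgroup Γ b' ∧ ∀ g ∈ J, g ∈ invarianceSubgroup Γ b' := by
    induction J using Finset.induction with
    | empty => exact ⟨b, hb, hcomm, by simp⟩
    | insert u J _ ih =>
      obtain ⟨b₁, hb₁, hcomm₁, hJ⟩ := ih
      have := Subgroup.Normal.of_commutator_le Γ hcomm₁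
      obtain ⟨b₂, hb₂, hle, hu⟩ := hb₁.exists_mem_invarianceSubgroup (u := u) (by simp [hc])
        (by simp [Subgroup.normalizer_eq_top])
      exact ⟨b₂, hb₂, hcomm₁.trans hle, Finset.forall_mem_insert _ _ _ |>.2
        ⟨hu, fun g hg => hle (hJ g hg)⟩⟩
  obtain ⟨b', hb', htop⟩ := exists_isBddPrimitive_le_invarianceSubgroup (Λ := (⊤ : Subgroup Γ))
    fun J T _ => by
      obtain ⟨b', hb', _, hJ⟩ := hfinite J
      exact ⟨b', hb', fun g hg L _ => hJ g hg L⟩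
  exact ⟨b', hb', top_le_iff.1 htop⟩

end Primitive

section SampleMean
variable {ι S : Type*} [Fintype ι] [DecidableEq ι] [Fintype S] [Nonempty S]

lemma expect_expect_update (F : (ι → S) → ℝ) (a : ι) :
    𝔼 t, 𝔼 z, F (Function.update z a t) = 𝔼 z, F z := by
  let swap : S × (ι → S) → S × (ι → S) := fun q => (q.2 a, Function.update q.2 a q.1)
  have hswap : Function.Involutive swap := fun q => by simp [swap]
  calc 𝔼 t, 𝔼 z, F (Function.update z a t) = 𝔼 q : S × (ι → S), F (swap q).2 := by
        rw [← Finset.univ_product_univ, Finset.expect_product]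
    _ = 𝔼 q : S × (ι → S), F q.2 :=
        Fintype.expect_equiv hswap.toPerm _ _ fun q => rfl
    _ = 𝔼 z, F z := by
        rw [← Finset.univ_product_univ, Finset.expect_product]
        exact Fintype.expect_const (ι := S) (𝔼 z, F z)

lemma expect_mul_apply (F : (ι → S) → ℝ) (w : S → ℝ) (a : ι) :
    𝔼 z, F z * w (z a) = 𝔼 t, w t * 𝔼 z, F (Function.update z a t) := by
  rw [← expect_expect_update _ a]
  simp only [Function.update_self, mul_comm _ (w _), ← Finset.mul_expect]

lemma expect_apply_mul_apply {w : S → ℝ} (hw : 𝔼 t, w t = 0) (a b : ι) :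
    𝔼 z : ι → S, w (z a) * w (z b) = if a = b then 𝔼 t, w t ^ 2 else 0 := by
  rw [expect_mul_apply (fun z => w (z a))]
  split_ifs with hab
  · simp [hab, sq]
  · simp [Function.update_of_ne hab, ← Finset.expect_mul, hw]

lemma expect_sq_expect_apply {w : S → ℝ} (hw : 𝔼 t, w t = 0) :
    𝔼 z : ι → S, (𝔼 a, w (z a)) ^ 2 = (𝔼 t, w t ^ 2) / Fintype.card ι := by
  cases isEmpty_or_nonempty ι
  · simp
  calc 𝔼 z : ι → S, (𝔼 a, w (z a)) ^ 2 = 𝔼 a, 𝔼 b, 𝔼 z : ι → S, w (z a) * w (z b) := by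
        simp only [sq, Finset.expect_mul_expect, Finset.expect_comm (s := (.univ : Finset (ι → S)))]
    _ = _ := by
        simp only [expect_apply_mul_apply hw, Fintype.expect_eq_sum_div_card (ι := ι),
          Finset.sum_ite_eq, Finset.mem_univ, if_true, Finset.sum_const, Finset.card_univ,
          nsmul_eq_mul]
        exact mul_div_cancel_left₀ _ (Nat.cast_ne_zero.2 Fintype.card_ne_zero)

/-- A weak law of large numbers: resampling one coordinate as `s` or as `s'` has, on average over
the coordinates, the same effect on a bounded function of many independent variables. -/
lemma abs_expect_update_sub_sq_le {F : (ι → S) → ℝ} {C : ℝ} (hF : ∀ z, |F z| ≤ C) (s s' : S) :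
    (𝔼 a, (𝔼 z, F (Function.update z a s) - 𝔼 z, F (Function.update z a s'))) ^ 2 ≤
      C ^ 2 * (2 * Fintype.card S) / Fintype.card ι := by
  classical
  let w (t : S) : ℝ := Fintype.card S * ((if t = s then 1 else 0) - if t = s' then 1 else 0)
  have hcard : (Fintype.card S : ℝ) ≠ 0 := by positivity
  have hpair (φ : S → ℝ) : 𝔼 t, w t * φ t = φ s - φ s' := by
    simp only [w, mul_assoc, ← Finset.mul_expect]
    simp [sub_mul, Fintype.expect_eq_sum_div_card, Finset.sum_sub_distrib, mul_div_cancel₀ _ hcard]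
  have hw : 𝔼 t, w t = 0 := by simpa using hpair 1
  have hvar : 𝔼 t, w t ^ 2 ≤ 2 * Fintype.card S := by
    simp only [sq, hpair w]
    rcases eq_or_ne s s' with rfl | h
    · simp
    · simp only [w, if_pos, if_neg h, if_neg h.symm]
      linarith
  have hlinear (a : ι) : 𝔼 z, F z * w (z a) =
      𝔼 z, F (Function.update z a s) - 𝔼 z, F (Function.update z a s') := by
    rw [expect_mul_apply, hpair fun t => 𝔼 z, F (Function.update z a t)]
  calc (𝔼 a, (𝔼 z, F (Function.update z a s) - 𝔼 z, F (Function.update z a s'))) ^ 2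
      = (𝔼 z, F z * 𝔼 a, w (z a)) ^ 2 := by
        simp only [Finset.mul_expect, Finset.expect_comm (s := (.univ : Finset (ι → S))), hlinear]
    _ ≤ (𝔼 z, F z ^ 2) * 𝔼 z : ι → S, (𝔼 a, w (z a)) ^ 2 :=
        Finset.expect_mul_sq_le_sq_mul_sq _ _ _
    _ ≤ C ^ 2 * (2 * Fintype.card S) / Fintype.card ι := by
        rw [expect_sq_expect_apply hw, mul_div_assoc]
        gcongr
        exact Finset.expect_le Finset.univ_nonempty fun z _ =>
          sq_le_sq.2 ((hF z).trans (le_abs_self C))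

end SampleMean

section CommutingConjugates
variable {Γ : Type*} [Group Γ]

/-- All conjugates of the subgroup `G` by the powers `t ^ i`, `i ≥ 1`, commute with `G`. Hence the
conjugates by the powers of `t` commute with each other, and generate a homomorphic image of the
restricted direct power of `G` on which `t` acts as a shift. -/
def HasCommutingConjugates (G : Subgroup Γ) (t : Γ) : Prop :=
  ∀ g ∈ G, ∀ k ∈ G, ∀ i : ℕ, Commute g (t ^ (i + 1) * k * (t ^ (i + 1))⁻¹)

/-- Right multiplication by `t ^ k` for a random `k` in `{0, …, K - 1}`. -/
def rightShift (t : Γ) (K : ℕ) : Fin K → Γ → Γ := fun k x => x * t ^ (k : ℕ)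

lemma rightShift_smul (t : Γ) {K : ℕ} (k : Fin K) (g x : Γ) :
    rightShift t K k (g • x) = g • rightShift t K k x :=
  mul_assoc _ _ _

lemma abs_randomPullback_rightShift_sub_le (t : Γ) (K a : ℕ) [NeZero K] {c : List Γ → ℝ} {C : ℝ}
    (hC : ∀ L, |c L| ≤ C) (L : List Γ) :
    |randomPullback (rightShift t K) c (L.map (· * t ^ a)) - randomPullback (rightShift t K) c L| ≤
      L.length * (a * (2 * C / K)) := by
  induction L generalizing c with
  | nil => simp [randomPullback]
  | cons x L ih =>
    let d (k : ℕ) : List Γ → ℝ :=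
      randomPullback (rightShift t K) fun M => c (x * t ^ k :: M)
    have hhead : |𝔼 k : Fin K, d (k + a) (L.map (· * t ^ a)) -
        𝔼 k : Fin K, d k (L.map (· * t ^ a))| ≤ a * (2 * C / K) :=
      abs_expect_shift_sub_le (φ := fun k => d k (L.map (· * t ^ a)))
        (fun k => abs_randomPullback_le _ (fun M => hC _) _) K a
    have htail : |𝔼 k : Fin K, (d k (L.map (· * t ^ a)) - d k L)| ≤
        L.length * (a * (2 * C / K)) :=
      abs_expect_le_of_forall fun k => ih fun M => hC _
    rw [Finset.expect_sub_distrib] at htail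
    calc _ = |𝔼 k : Fin K, d (k + a) (L.map (· * t ^ a)) - 𝔼 k : Fin K, d k L| := by
          simp only [randomPullback, List.map_cons, rightShift, d, mul_assoc, ← pow_add, add_comm]
      _ ≤ _ := abs_sub_le _ (𝔼 k : Fin K, d k (L.map (· * t ^ a))) _
      _ ≤ (x :: L).length * (a * (2 * C / K)) := by
          push_cast [List.length_cons]
          linarith

variable {G : Subgroup Γ}

/-- The product of the conjugates `t ^ i * z i * (t ^ i)⁻¹`, in increasing order of `i`. -/
def conjProd (t : Γ) : {M : ℕ} → (Fin M → G) → Γ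
  | 0, _ => 1
  | _ + 1, z => z 0 * (t * conjProd t (Fin.tail z) * t⁻¹)

lemma HasCommutingConjugates.conjProd_update {t : Γ} (h : HasCommutingConjugates G t) {M : ℕ}
    (z : Fin M → G) (a : Fin M) (g s : G) :
    conjProd t (Function.update z a (g * s)) =
      t ^ (a : ℕ) * g * (t ^ (a : ℕ))⁻¹ * conjProd t (Function.update z a s) := by
  induction M with
  | zero => exact a.elim0
  | succ M ih =>
    induction a using Fin.cases with
    | zero => simp [conjProd, mul_assoc]
    | succ a =>
      have hz (r : G) : Function.update z a.succ r 0 = z 0 :=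
        Function.update_of_ne (Fin.succ_ne_zero a).symm _ _
      have hcomm := (h (z 0) (z 0).2 g g.2 a).eq
      simp only [conjProd, Fin.tail_update_succ, ih, hz, Fin.val_succ]
      rw [← mul_assoc (t ^ ((a : ℕ) + 1) * g * _) (z 0 : Γ), ← hcomm, pow_succ']
      group

lemma exists_equivariant_retraction (G : Subgroup Γ) :
    ∃ p : Γ → G, ∀ (g : G) (x : Γ), p (g * x) = g * p x := by
  obtain ⟨T, hT, -⟩ := G.exists_isComplement_right 1
  exact ⟨fun x => (hT.equiv x).1, fun g x => congrArg Prod.fst (hT.equiv_mul_left g x)⟩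

/-- The random self-map of `Γ` which writes the `G`-coordinate `p x` of `x` into the `a`-th factor
of a random element of the product of the conjugates of `G`, and then conjugates the `a`-th factor
back to `G`. -/
def lampMap (t : Γ) (p : Γ → G) (S : Finset G) {M : ℕ} (a : Fin M) (z : Fin M → S) (x : Γ) : Γ :=
  (t ^ (a : ℕ))⁻¹ * conjProd t (Function.update (fun i => (z i : G)) a (p x)) * t ^ (a : ℕ)

variable {t : Γ} {p : Γ → G} {S : Finset G} {M : ℕ}

lemma HasCommutingConjugates.lampMap_smul (h : HasCommutingConjugates G t)
    (hp : ∀ (g : G) (x : Γ), p (g * x) = g * p x) (a : Fin M) (z : Fin M → S) {g : Γ} (hg : g ∈ G)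
    (x : Γ) : lampMap t p S a z (g • x) = g • lampMap t p S a z x := by
  have hgx : p (g * x) = ⟨g, hg⟩ * p x := hp ⟨g, hg⟩ x
  simp only [lampMap, smul_eq_mul, hgx, h.conjProd_update]
  group

lemma abs_randomPullback_lampMap_sub_le [Nonempty S] {c : List Γ → ℝ}
    (hinv : invarianceSubgroup Γ c = ⊤) {l : ℕ} {η : ℝ} {a : Fin M}
    (hη : ∀ L : List Γ, L.length = l → |c (L.map (· * t ^ (a : ℕ))) - c L| ≤ η)
    {x : Fin l → Γ} {s : Fin l → S} (hs : ∀ j, (s j : G) = p (x j)) :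
    |randomPullback (lampMap t p S a) c (List.ofFn x) - 𝔼 z : Fin M → Fin l → S,
      c (List.ofFn fun j => conjProd t fun i => (Function.update z a s i j : G))| ≤ η := by
  have hupdate (z : Fin M → Fin l → S) (j : Fin l) :
      Function.update (fun i => (z i j : G)) a (p (x j)) =
        fun i => (Function.update z a s i j : G) := by
    funext i
    rcases eq_or_ne i a with rfl | hi
    · simp [hs]
    · simp [hi]
  have hlist (z : Fin M → Fin l → S) :
      (List.ofFn fun j => lampMap t p S a (fun i => z i j) (x j)) =
        ((List.ofFn fun j => conjProd t fun i => (Function.update z a s i j : G)).map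
          (· * t ^ (a : ℕ))).map ((t ^ (a : ℕ))⁻¹ • ·) := by
    simp [List.map_ofFn, Function.comp_def, lampMap, hupdate, mul_assoc]
  rw [randomPullback_ofFn, ← Fintype.expect_equiv (Equiv.piComm fun _ _ => S)
    (fun z => c (List.ofFn fun j => lampMap t p S a (fun i => z i j) (x j))) _ fun _ => rfl,
    ← Finset.expect_sub_distrib]
  refine abs_expect_le_of_forall fun z => ?_
  have hc : (t ^ (a : ℕ))⁻¹ ∈ invarianceSubgroup Γ c := by simp [hinv]
  rw [hlist z, hc]
  exact hη _ (by simp)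

/-- The weak law of large numbers makes the average over all positions `a` insensitive to the
values `p x`. -/
lemma abs_expect_randomPullback_lampMap_sub_le [NeZero M] [Nonempty S] {c : List Γ → ℝ} {C : ℝ}
    (hC : ∀ L, |c L| ≤ C) (hinv : invarianceSubgroup Γ c = ⊤) {l : ℕ} {η : ℝ}
    (hη : ∀ (a : Fin M) (L : List Γ), L.length = l →
      |c (L.map (· * t ^ (a : ℕ))) - c L| ≤ η)
    {x x' : Fin l → Γ} (hx : ∀ j, p (x j) ∈ S) (hx' : ∀ j, p (x' j) ∈ S) :
    |𝔼 a, randomPullback (lampMap t p S (M := M) a) c (List.ofFn x') -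
      𝔼 a, randomPullback (lampMap t p S (M := M) a) c (List.ofFn x)| ≤
      2 * η + √(C ^ 2 * (2 * S.card ^ l) / M) := by
  let s (j : Fin l) : S := ⟨p (x j), hx j⟩
  let s' (j : Fin l) : S := ⟨p (x' j), hx' j⟩
  let F (z : Fin M → Fin l → S) : ℝ := c (List.ofFn fun j => conjProd t fun i => (z i j : G))
  have hlln := Real.abs_le_sqrt (abs_expect_update_sub_sq_le (F := F) (fun z => hC _) s' s)
  have hcmp := abs_expect_le_of_forall fun a =>
    abs_randomPullback_lampMap_sub_le (s := s) hinv (hη a) fun j => rfl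
  have hcmp' := abs_expect_le_of_forall fun a =>
    abs_randomPullback_lampMap_sub_le (s := s') hinv (hη a) fun j => rfl
  simp only [Finset.expect_sub_distrib, Fintype.card_fun, Fintype.card_fin, Fintype.card_coe,
    Nat.cast_pow] at hlln hcmp hcmp'
  rw [abs_le] at hlln hcmp hcmp' ⊢
  constructor <;> linarith [hlln.1, hlln.2, hcmp.1, hcmp.2, hcmp'.1, hcmp'.2]

/-- The primitive of a cocycle `c` obtained by coning off the pullbacks of `c` along `lampMap`,
averaged over all positions. -/
noncomputable def lampPrimitive (t : Γ) (p : Γ → G) (S : Finset G) (M : ℕ) (c : List Γ → ℝ)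
    (L : List Γ) : ℝ :=
  𝔼 a : Fin M, (randomPullback (lampMap t p S a) c (1 :: L) - prism (lampMap t p S a) c L)

lemma isBddPrimitive_lampPrimitive [NeZero M] [Nonempty S] {c : List Γ → ℝ} {C : ℝ}
    (hc : coboundary c = 0) (hC : ∀ L, |c L| ≤ C) :
    IsBddPrimitive c (fun n => C + n * C) (lampPrimitive t p S M c) := by
  refine .expect fun a => ?_
  have hpullback : coboundary (randomPullback (lampMap t p S a) c) = 0 := by
    rw [coboundary_randomPullback, hc, randomPullback_zero]
  exact (isBddPrimitive_cone hpullback (abs_randomPullback_le _ hC) 1).sub_prism hc hC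

lemma HasCommutingConjugates.abs_lampPrimitive_sub_le [NeZero M] (h : HasCommutingConjugates G t)
    (hp : ∀ (g : G) (x : Γ), p (g * x) = g * p x) {c : List Γ → ℝ} {C η : ℝ}
    (hC : ∀ L, |c L| ≤ C) (hinv : invarianceSubgroup Γ c = ⊤) {l : ℕ}
    (hη : ∀ (a : Fin M) (L : List Γ), L.length = l + 1 →
      |c (L.map (· * t ^ (a : ℕ))) - c L| ≤ η)
    {g : Γ} (hg : g ∈ G) {x : Fin l → Γ} (h1 : p 1 ∈ S) (hx : ∀ j, p (x j) ∈ S)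
    (hgx : ∀ j, p (g • x j) ∈ S) :
    |lampPrimitive t p S M c ((List.ofFn x).map (g • ·)) - lampPrimitive t p S M c (List.ofFn x)| ≤
      2 * η + √(C ^ 2 * (2 * S.card ^ (l + 1)) / M) := by
  have : Nonempty S := ⟨p 1, h1⟩
  have hgc : g ∈ invarianceSubgroup Γ c := by simp [hinv]
  have hprism (a : Fin M) : prism (lampMap t p S a) c ((List.ofFn x).map (g • ·)) =
      prism (lampMap t p S a) c (List.ofFn x) :=
    mem_invarianceSubgroup_prism (fun z x => h.lampMap_smul hp a z hg x) hgc _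
  have hlist (y : Fin l → Γ) : 1 :: List.ofFn y = List.ofFn (Fin.cons 1 y : Fin (l + 1) → Γ) :=
    (List.ofFn_cons 1 y).symm
  have hmem {y : Fin l → Γ} (hy : ∀ j, p (y j) ∈ S) (j : Fin (l + 1)) :
      p ((Fin.cons 1 y : Fin (l + 1) → Γ) j) ∈ S := by
    cases j using Fin.cases <;> simp [h1, hy]
  simp only [lampPrimitive, Finset.expect_sub_distrib, hprism, sub_sub_sub_cancel_right]
  rw [List.map_ofFn, hlist, hlist]
  exact abs_expect_randomPullback_lampMap_sub_le hC hinv hη (hmem hx) (hmem hgx)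

lemma tendsto_lampError (C l s : ℝ) :
    Tendsto (fun n : ℕ => 2 * (l * ((n + 1 : ℕ) * (2 * C / ((n + 1) ^ 2 : ℕ)))) +
      √(C ^ 2 * (2 * s) / (n + 1 : ℕ))) atTop (𝓝 0) := by
  have hinv (A : ℝ) : Tendsto (fun n : ℕ => A / (n + 1 : ℕ)) atTop (𝓝 0) :=
    (tendsto_const_div_atTop_nhds_zero_nat A).comp (tendsto_add_atTop_nat 1)
  have hsqrt := (hinv (C ^ 2 * (2 * s))).sqrt
  rw [Real.sqrt_zero] at hsqrt
  have hlinear (n : ℕ) : 2 * (l * ((n + 1 : ℕ) * (2 * C / ((n + 1) ^ 2 : ℕ)))) =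
      4 * l * C / (n + 1 : ℕ) := by
    push_cast
    field_simp
    ring
  simpa only [hlinear, add_zero] using (hinv (4 * l * C)).add hsqrt

/-- The primitive of a cocycle `c` obtained by first averaging `c` over right multiplication by the
first `(n + 1) ^ 2` powers of `t`, and then applying `lampPrimitive` with `n + 1` positions. -/
noncomputable def shiftedLampPrimitive (t : Γ) (p : Γ → G) (S : Finset G) (n : ℕ)
    (c : List Γ → ℝ) : List Γ → ℝ :=
  lampPrimitive t p S (n + 1) (randomPullback (rightShift t ((n + 1) ^ 2)) c) -
    prism (rightShift t ((n + 1) ^ 2)) c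

lemma isBddPrimitive_shiftedLampPrimitive [Nonempty S] (n : ℕ) {c : List Γ → ℝ} {C : ℝ}
    (hc : coboundary c = 0) (hC : ∀ L, |c L| ≤ C) :
    IsBddPrimitive c (fun n => C + n * C + n * C) (shiftedLampPrimitive t p S n c) := by
  have hpullback : coboundary (randomPullback (rightShift t ((n + 1) ^ 2)) c) = 0 := by
    rw [coboundary_randomPullback, hc, randomPullback_zero]
  exact (isBddPrimitive_lampPrimitive hpullback (abs_randomPullback_le _ hC)).sub_prism hc hC

/-- Averaging over more powers of `t` than there are positions makes the difference between the
positions negligible. -/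
lemma HasCommutingConjugates.tendsto_shiftedLampPrimitive_sub (h : HasCommutingConjugates G t)
    (hp : ∀ (g : G) (x : Γ), p (g * x) = g * p x) {c : List Γ → ℝ} {C : ℝ}
    (hC : ∀ L, |c L| ≤ C) (hinv : invarianceSubgroup Γ c = ⊤) {g : Γ} (hg : g ∈ G) {L : List Γ}
    (h1 : p 1 ∈ S) (hL : ∀ x ∈ L, p x ∈ S) (hgL : ∀ x ∈ L, p (g • x) ∈ S) :
    Tendsto (fun n => shiftedLampPrimitive t p S n c (L.map (g • ·)) -
      shiftedLampPrimitive t p S n c L) atTop (𝓝 0) := by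
  have hC0 : 0 ≤ C := (abs_nonneg _).trans (hC [])
  have hgc (k : Γ) : k ∈ invarianceSubgroup Γ c := by simp [hinv]
  obtain ⟨⟨l, x⟩, rfl⟩ := List.equivSigmaTuple.symm.surjective L
  simp only [List.equivSigmaTuple, Equiv.coe_fn_symm_mk, List.forall_mem_ofFn_iff] at hL hgL ⊢
  refine squeeze_zero_norm (fun n => ?_) (tendsto_lampError C (l + 1 : ℕ) (S.card ^ (l + 1)))
  have hequiv (k : Fin ((n + 1) ^ 2)) (g x : Γ) :
      rightShift t _ k (g • x) = g • rightShift t _ k x := rightShift_smul t k g x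
  have hprism := mem_invarianceSubgroup_prism (fun k x => hequiv k g x) (hgc g) (List.ofFn x)
  simp only [shiftedLampPrimitive, Pi.sub_apply, hprism, sub_sub_sub_cancel_right]
  refine h.abs_lampPrimitive_sub_le hp (abs_randomPullback_le _ hC)
    ((Subgroup.eq_top_iff' _).2 fun k =>
      mem_invarianceSubgroup_randomPullback (fun i x => hequiv i k x) (hgc k))
    (fun a L hL => ?_) hg h1 hL hgL
  refine (abs_randomPullback_rightShift_sub_le t _ a hC L).trans ?_
  rw [hL]
  gcongr
  exact a.2.le

lemma HasCommutingConjugates.exists_isBddPrimitive_le (h : HasCommutingConjugates G t)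
    {c : List Γ → ℝ} {C : ℝ} (hc : coboundary c = 0) (hC : ∀ L, |c L| ≤ C)
    (hinv : invarianceSubgroup Γ c = ⊤) :
    ∃ b, IsBddPrimitive c (fun n => C + n * C + n * C) b ∧ G ≤ invarianceSubgroup Γ b := by
  classical
  obtain ⟨p, hp⟩ := exists_equivariant_retraction G
  refine exists_isBddPrimitive_le_invarianceSubgroup fun J T hJ => ?_
  let V : Finset Γ := T.biUnion List.toFinset
  let S : Finset G := insert (p 1) (V.image p ∪ Finset.image₂ (fun g x => p (g • x)) J V)
  have h1 : p 1 ∈ S := Finset.mem_insert_self _ _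
  have : Nonempty S := ⟨p 1, h1⟩
  obtain ⟨b, hb, hlim⟩ := exists_isBddPrimitive_limit (l := atTop) fun n =>
    isBddPrimitive_shiftedLampPrimitive (t := t) (p := p) (S := S) n hc hC
  refine ⟨b, hb, fun g hg L hL => hlim _ _ ?_⟩
  have hV : ∀ x ∈ L, x ∈ V := fun x hx => Finset.mem_biUnion.2 ⟨L, hL, List.mem_toFinset.2 hx⟩
  refine h.tendsto_shiftedLampPrimitive_sub hp hC hinv (hJ g hg) h1 (fun x hx => ?_) fun x hx => ?_
  · exact Finset.mem_insert_of_mem (Finset.mem_union_left _ (Finset.mem_image_of_mem _ (hV x hx)))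
  · exact Finset.mem_insert_of_mem
      (Finset.mem_union_right _ (Finset.mem_image₂_of_mem hg (hV x hx)))

lemma exists_isBddPrimitive_le_of_hasCommutingConjugates {Λ : Subgroup Γ}
    (hΛ : ∀ J : Finset Γ, (∀ g ∈ J, g ∈ Λ) →
      ∃ (G : Subgroup Γ) (t : Γ), (∀ g ∈ J, g ∈ G) ∧ HasCommutingConjugates G t)
    {c : List Γ → ℝ} {C : ℝ} (hc : coboundary c = 0) (hC : ∀ L, |c L| ≤ C)
    (hinv : invarianceSubgroup Γ c = ⊤) :
    ∃ b, IsBddPrimitive c (fun n => C + n * C + n * C) b ∧ Λ ≤ invarianceSubgroup Γ b :=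
  exists_isBddPrimitive_le_invarianceSubgroup fun J _ hJ => by
    obtain ⟨G, t, hJG, hG⟩ := hΛ J hJ
    obtain ⟨b, hb, hGb⟩ := hG.exists_isBddPrimitive_le hc hC hinv
    exact ⟨b, hb, fun g hg L _ => hGb (hJG g hg) L⟩

end CommutingConjugates

section Homogeneous
variable {Γ : Type*} [Group Γ]

lemma coboundary_ofFn_partialProd {c : List Γ → ℝ} (hc : invarianceSubgroup Γ c = ⊤) {n : ℕ}
    (g : Fin (n + 1) → Γ) :
    coboundary c (List.ofFn (Fin.partialProd g)) =
      bddDelta (fun _ v => v) n (fun g => c (List.ofFn (Fin.partialProd g))) g := by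
  have hfirst : c (List.ofFn (Fin.partialProd g ∘ (0 : Fin (n + 2)).succAbove)) =
      c (List.ofFn (Fin.partialProd (Fin.tail g))) := by
    have hcons : Fin.partialProd g ∘ (0 : Fin (n + 2)).succAbove =
        (g 0 • ·) ∘ Fin.partialProd (Fin.tail g) := by
      funext j
      simp [Fin.partialProd_succ']
    have hg : g 0 ∈ invarianceSubgroup Γ c := by simp [hc]
    rw [hcons, ← List.map_ofFn, hg]
  have hlast : (Fin.last n).contractNth (· * ·) g = fun j => g j.castSucc :=
    funext fun j => Fin.contractNth_apply_of_lt _ _ _ _ (by simp)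
  rw [coboundary_ofFn, Fin.sum_univ_succ, hfirst]
  simp only [← Fin.partialProd_contractNth]
  rw [Fin.sum_univ_castSucc, ← add_assoc, hlast]
  simp only [bddDelta, smul_eq_mul, Fin.val_zero, pow_zero, one_mul, Fin.val_succ, Fin.val_last]
  rfl

/-- The homogeneous cochain `(x₀, …, xₙ) ↦ f (x₀⁻¹ x₁, …, xₙ₋₁⁻¹ xₙ)`, extended by `0` to the
simplices of other dimensions. -/
noncomputable def homogenize {n : ℕ} (f : (Fin n → Γ) → ℝ) (L : List Γ) : ℝ :=
  if h : L.length = n + 1 then f fun i => L[(i : ℕ)]⁻¹ * L[(i : ℕ) + 1] else 0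

variable {n : ℕ} {f : (Fin n → Γ) → ℝ}

lemma homogenize_ofFn (x : Fin (n + 1) → Γ) :
    homogenize f (List.ofFn x) = f fun i => (x i.castSucc)⁻¹ * x i.succ := by
  simp only [homogenize, List.length_ofFn, dite_true, List.getElem_ofFn]
  rfl

lemma homogenize_of_length_ne {L : List Γ} (hL : L.length ≠ n + 1) : homogenize f L = 0 :=
  dif_neg hL

lemma homogenize_ofFn_partialProd (g : Fin n → Γ) :
    homogenize f (List.ofFn (Fin.partialProd g)) = f g := by
  simp only [homogenize_ofFn, Fin.partialProd_right_inv]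

lemma invarianceSubgroup_homogenize (f : (Fin n → Γ) → ℝ) :
    invarianceSubgroup Γ (homogenize f) = ⊤ :=
  (Subgroup.eq_top_iff' _).2 fun g L => by simp [homogenize, mul_assoc]

lemma coboundary_homogenize (hf : bddDelta (fun _ v => v) n f = 0) :
    coboundary (homogenize f) = 0 := by
  funext L
  obtain ⟨⟨m, x⟩, rfl⟩ := List.equivSigmaTuple.symm.surjective L
  simp only [List.equivSigmaTuple, Equiv.coe_fn_symm_mk, Pi.zero_apply]
  rcases m with _ | m
  · simp [coboundary]
  rcases eq_or_ne m (n + 1) with rfl | hm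
  · let g (i : Fin (n + 1)) : Γ := (x i.castSucc)⁻¹ * x i.succ
    have hx : List.ofFn x = (List.ofFn (Fin.partialProd g)).map (x 0 • ·) := by
      rw [List.map_ofFn]
      exact congrArg List.ofFn (Fin.partialProd_left_inv x).symm
    have hinv : x 0 ∈ invarianceSubgroup Γ (homogenize f) := by
      simp [invarianceSubgroup_homogenize]
    rw [hx, ← congrFun (coboundary_comp_map (x 0 • ·) (homogenize f)),
      funext (mem_invarianceSubgroup.1 hinv),
      coboundary_ofFn_partialProd (invarianceSubgroup_homogenize f)]
    simp only [homogenize_ofFn_partialProd, hf, Pi.zero_apply]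
  · rw [coboundary_ofFn]
    exact Finset.sum_eq_zero fun k _ => by simp [homogenize_of_length_ne, hm]

lemma boundedlyAcyclic_of_exists_isBddPrimitive
    (h : ∀ (c : List Γ → ℝ) (C : ℝ), coboundary c = 0 → (∀ L, |c L| ≤ C) →
      invarianceSubgroup Γ c = ⊤ → ∃ B b, IsBddPrimitive c B b ∧ invarianceSubgroup Γ b = ⊤) :
    BoundedlyAcyclic Γ := by
  intro n f ⟨C, hC⟩ hf
  have hbound (L : List Γ) : |homogenize f L| ≤ C := by
    unfold homogenize
    split_ifs
    · exact hC _
    · simpa using (norm_nonneg _).trans (hC 1)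
  obtain ⟨B, b, hb, hinv⟩ := h (homogenize f) C (coboundary_homogenize hf) hbound
    (invarianceSubgroup_homogenize f)
  refine ⟨fun g => b (List.ofFn (Fin.partialProd g)), ⟨B (n + 1), fun g => ?_⟩,
    funext fun g => ?_⟩
  · simpa using hb.abs_le (List.ofFn (Fin.partialProd g))
  · rw [← coboundary_ofFn_partialProd hinv, hb.coboundary_eq, homogenize_ofFn_partialProd]

theorem boundedlyAcyclic_of_hasCommutingConjugates
    (h : ∀ J : Finset Γ, (∀ g ∈ J, g ∈ commutator Γ) →
      ∃ (G : Subgroup Γ) (t : Γ), (∀ g ∈ J, g ∈ G) ∧ HasCommutingConjugates G t) :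
    BoundedlyAcyclic Γ :=
  boundedlyAcyclic_of_exists_isBddPrimitive fun _ _ hc hC hinv => by
    obtain ⟨_, hb, hcomm⟩ := exists_isBddPrimitive_le_of_hasCommutingConjugates h hc hC hinv
    exact ⟨_, exists_isBddPrimitive_invarianceSubgroup_eq_top hinv hb hcomm⟩

end Homogeneous

section OrderPreserving

open scoped commutatorElement

/-- The subgroup of all elements which fix `l`-almost all points. -/
def eventualFixingSubgroup (M : Type*) {X : Type*} [Group M] [MulAction M X] (l : Filter X) :
    Subgroup M where
  carrier := {g | ∀ᶠ x in l, g • x = x}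
  one_mem' := by simp
  mul_mem' {g h} hg hh := by
    filter_upwards [hg, hh] with x hgx hhx
    rw [mul_smul, hhx, hgx]
  inv_mem' {g} hg := by
    filter_upwards [hg] with x hx
    rw [inv_smul_eq_iff, hx]

lemma commutatorElement_mem_eventualFixingSubgroup {M X : Type*} [Group M] [MulAction M X]
    {l : Filter X} {f g : M} (hcomm : ∀ᶠ x in l, f • g • x = g • f • x)
    (hlim : Tendsto ((g * f)⁻¹ • ·) l l) : ⁅f, g⁆ ∈ eventualFixingSubgroup M l := by
  filter_upwards [hlim.eventually hcomm] with x hx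
  calc ⁅f, g⁆ • x = f • g • (g * f)⁻¹ • x := by
        simp only [commutatorElement_def, mul_inv_rev, smul_smul, mul_assoc]
    _ = x := by rw [hx, smul_smul g f, smul_inv_smul]

lemma exists_forall_mem_fixingSubgroup_compl_Ioo {M X : Type*} [Group M] [LinearOrder X]
    [BoundedOrder X] [TopologicalSpace X] [OrderTopology X] [DenselyOrdered X] [Nontrivial X]
    [MulAction M X] {J : Finset M} (hJ : ∀ g ∈ J, g ∈ eventualFixingSubgroup M (𝓝 ⊥ ⊔ 𝓝 (⊤ : X))) :
    ∃ a b : X, ⊥ < a ∧ b < ⊤ ∧ ∀ g ∈ J, g ∈ fixingSubgroup M (Set.Ioo a b)ᶜ := by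
  have hfix : ∀ᶠ x in 𝓝 ⊥ ⊔ 𝓝 (⊤ : X), ∀ g ∈ J, g • x = x := (eventually_all_finset J).2 hJ
  rw [eventually_sup, nhds_bot_basis_Iic.eventually_iff, nhds_top_basis_Ici.eventually_iff] at hfix
  obtain ⟨⟨a, ha, hfixa⟩, b, hb, hfixb⟩ := hfix
  refine ⟨a, b, ha, hb, fun g hg => (mem_fixingSubgroup_iff M).2 fun x hx => ?_⟩
  rcases le_or_gt x a with hxa | hxa
  · exact hfixa hxa g hg
  · exact hfixb (not_lt.1 fun hxb => hx ⟨hxa, hxb⟩) g hg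

lemma strictMono_pow_smul {M X : Type*} [Monoid M] [Preorder X] [MulAction M X] {t : M}
    (ht : StrictMono (t • · : X → X)) (n : ℕ) : StrictMono (t ^ n • · : X → X) := by
  simpa only [smul_iterate] using ht.iterate n

lemma exists_pow_smul_lt {M X : Type*} [Group M] [CompleteLinearOrder X] [TopologicalSpace X]
    [OrderTopology X] [MulAction M X] {t : M} (hcont : Continuous (t • · : X → X))
    (hle : ∀ x : X, t • x ≤ x) (hfix : ∀ x : X, t • x = x → x = ⊥ ∨ x = ⊤) {a b : X}
    (ha : ⊥ < a) (hb : b < ⊤) : ∃ n : ℕ, t ^ n • b < a := by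
  have hlim : Tendsto (fun n => (t • ·)^[n] b) atTop (𝓝 (⨅ n, (t • ·)^[n] b)) :=
    tendsto_atTop_iInf fun m n hmn => Function.antitone_iterate_of_le_id hle hmn b
  have hbot : ⨅ n, (t • ·)^[n] b = ⊥ :=
    (hfix _ (isFixedPt_of_tendsto_iterate hlim hcont.continuousAt)).resolve_right
      ((iInf_le _ 0).trans_lt hb).ne
  rw [hbot] at hlim
  obtain ⟨n, hn⟩ := (hlim.eventually (gt_mem_nhds ha)).exists
  exact ⟨n, by rwa [smul_iterate] at hn⟩

lemma commute_conj_of_fixed {M X : Type*} [Group M] [LinearOrder X] [MulAction M X]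
    [FaithfulSMul M X] {a b : X} {g k r : M} (hg : ∀ x ≤ a, g • x = x) (hk : ∀ x, b ≤ x → k • x = x)
    (hr : StrictMono (r • · : X → X)) (hrb : r • b ≤ a) : Commute g (r * k * r⁻¹) := by
  have hconj (x : X) (hx : a ≤ x) : (r * k * r⁻¹) • x = x := by
    have hb : b ≤ r⁻¹ • x := hr.le_iff_le.1 (by simpa using hrb.trans hx)
    rw [mul_smul, mul_smul, hk _ hb, smul_inv_smul]
  have hdisj : (MulAction.toPermHom M X g).Disjoint (MulAction.toPermHom M X (r * k * r⁻¹)) :=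
    fun x => (le_total x a).imp (hg x) (hconj x)
  exact Commute.of_map MulAction.toPerm_injective hdisj.commute

lemma hasCommutingConjugates_fixingSubgroup {M X : Type*} [Group M] [LinearOrder X]
    [MulAction M X] [FaithfulSMul M X] {a b : X} {t : M} (ht : StrictMono (t • · : X → X))
    (hta : t • a ≤ a) (htb : t • b ≤ a) :
    HasCommutingConjugates (fixingSubgroup M (Set.Ioo a b)ᶜ) t := by
  intro g hg k hk i
  have hpow := strictMono_pow_smul ht
  have hpowa (n : ℕ) : t ^ n • a ≤ a := by
    induction n with
    | zero => simp
    | succ n ih =>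
      rw [pow_succ, mul_smul]
      exact ((hpow n).monotone hta).trans ih
  rw [mem_fixingSubgroup_iff] at hg hk
  refine commute_conj_of_fixed (fun x hx => hg x fun h => hx.not_gt h.1)
    (fun x hx => hk x fun h => hx.not_gt h.2) (hpow (i + 1)) ?_
  rw [pow_succ, mul_smul]
  exact ((hpow i).monotone htb).trans (hpowa i)

theorem boundedlyAcyclic_of_commutator_le_eventualFixingSubgroup {Γ X : Type*} [Group Γ]
    [CompleteLinearOrder X] [TopologicalSpace X] [OrderTopology X] [DenselyOrdered X]
    [Nontrivial X] [MulAction Γ X] [FaithfulSMul Γ X]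
    (hΓ : commutator Γ ≤ eventualFixingSubgroup Γ (𝓝 ⊥ ⊔ 𝓝 (⊤ : X))) {t : Γ}
    (ht : StrictMono (t • · : X → X)) (hle : ∀ x : X, t • x ≤ x)
    (hfix : ∀ x : X, t • x = x → x = ⊥ ∨ x = ⊤) : BoundedlyAcyclic Γ := by
  refine boundedlyAcyclic_of_hasCommutingConjugates fun J hJ => ?_
  obtain ⟨a, b, ha, hb, hsupp⟩ :=
    exists_forall_mem_fixingSubgroup_compl_Ioo fun g hg => hΓ (hJ g hg)
  have hcont := ht.monotone.continuous_of_surjective (MulAction.surjective t)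
  obtain ⟨n, hn⟩ := exists_pow_smul_lt hcont hle hfix ha hb
  have hpowa : t ^ n • a ≤ a := by
    simpa only [smul_iterate, id_eq] using Function.iterate_le_id_of_le_id hle n a
  exact ⟨_, t ^ n, hsupp, hasCommutingConjugates_fixingSubgroup
    (strictMono_pow_smul ht n) hpowa hn.le⟩

end OrderPreserving

end BoundedCohomology

section Thompson
open Filter Topology BoundedCohomology

/-- `g` is affine with slope `m` near the fixed point `p`. -/
def HasSlopeNear (g : Equiv.Perm (Set.Icc (0 : ℝ) 1)) (p : Set.Icc (0 : ℝ) 1) (m : ℝ) : Prop :=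
  ∀ᶠ x in 𝓝 p, (g x : ℝ) = p + m * (x - p)

namespace HasSlopeNear
variable {f g : Equiv.Perm (Set.Icc (0 : ℝ) 1)} {p : Set.Icc (0 : ℝ) 1} {m m' : ℝ}

lemma tendsto (hg : HasSlopeNear g p m) : Tendsto g (𝓝 p) (𝓝 p) := by
  have haffine : Tendsto (fun x : Set.Icc (0 : ℝ) 1 => (p : ℝ) + m * (x - p)) (𝓝 p) (𝓝 p) := by
    have hcont : Continuous fun x : Set.Icc (0 : ℝ) 1 => (p : ℝ) + m * (x - p) := by fun_prop
    simpa using hcont.tendsto p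
  exact tendsto_subtype_rng.2 (haffine.congr' (hg.mono fun _ => Eq.symm))

lemma apply_comm (hf : HasSlopeNear f p m) (hg : HasSlopeNear g p m') :
    ∀ᶠ x in 𝓝 p, f (g x) = g (f x) := by
  filter_upwards [hf, hg, hf.tendsto.eventually hg, hg.tendsto.eventually hf]
    with x hfx hgx hgfx hfgx
  apply Subtype.ext
  rw [hfgx, hgfx, hfx, hgx]
  ring

end HasSlopeNear

namespace IsThompson
variable {g : Equiv.Perm (Set.Icc (0 : ℝ) 1)}

lemma strictMono (hg : IsThompson g) : StrictMono g :=
  fun _ _ h => hg.1 h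

lemma apply_bot (hg : IsThompson g) : g ⊥ = ⊥ :=
  (hg.strictMono.orderIsoOfSurjective g g.surjective).map_bot

lemma apply_top (hg : IsThompson g) : g ⊤ = ⊤ :=
  (hg.strictMono.orderIsoOfSurjective g g.surjective).map_top

lemma hasSlopeNear_bot (hg : IsThompson g) : ∃ m, HasSlopeNear g ⊥ m := by
  obtain ⟨s, -, hs⟩ := hg.2
  have hgap : ∀ᶠ y : Set.Icc (0 : ℝ) 1 in 𝓝 ⊥, ∀ q ∈ s, q ∉ Set.Ioo (0 : ℝ) y := by
    refine (eventually_all_finset s).2 fun q _ => ?_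
    rcases le_or_gt q 0 with hq | hq
    · exact .of_forall fun y hy => hq.not_gt hy.1
    · filter_upwards [continuous_subtype_val.continuousAt.eventually (gt_mem_nhds hq)] with y hy
        using fun h => h.2.not_gt hy
  obtain ⟨δ, hδ, hδs⟩ := nhds_bot_basis_Iic.eventually_iff.1 hgap
  obtain ⟨m, hm⟩ := hs ⊥ δ hδ.le (hδs Set.self_mem_Iic)
  refine ⟨2 ^ m, mem_of_superset (Iic_mem_nhds hδ) fun t ht => ?_⟩
  simpa [hg.apply_bot] using hm t ⟨t.2.1, ht⟩

lemma hasSlopeNear_top (hg : IsThompson g) : ∃ m, HasSlopeNear g ⊤ m := by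
  obtain ⟨s, -, hs⟩ := hg.2
  have hgap : ∀ᶠ y : Set.Icc (0 : ℝ) 1 in 𝓝 ⊤, ∀ q ∈ s, q ∉ Set.Ioo (y : ℝ) 1 := by
    refine (eventually_all_finset s).2 fun q _ => ?_
    rcases le_or_gt 1 q with hq | hq
    · exact .of_forall fun y hy => hq.not_gt hy.2
    · filter_upwards [continuous_subtype_val.continuousAt.eventually (lt_mem_nhds hq)] with y hy
        using fun h => h.1.not_gt hy
  obtain ⟨δ, hδ, hδs⟩ := nhds_top_basis_Ici.eventually_iff.1 hgap
  obtain ⟨m, hm⟩ := hs δ ⊤ hδ.le (hδs Set.self_mem_Ici)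
  have htop := hm ⊤ ⟨hδ.le, le_rfl⟩
  rw [hg.apply_top] at htop
  refine ⟨2 ^ m, mem_of_superset (Ici_mem_nhds hδ) fun t ht => ?_⟩
  have hmt := hm t ⟨ht, t.2.2⟩
  simp only [Set.mem_ofPred_eq]
  linarith

end IsThompson

lemma commutator_le_eventualFixingSubgroup {H : Subgroup (Equiv.Perm (Set.Icc (0 : ℝ) 1))}
    {p : Set.Icc (0 : ℝ) 1} (hslope : ∀ g ∈ H, ∃ m, HasSlopeNear g p m) :
    commutator H ≤ eventualFixingSubgroup H (𝓝 p) := by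
  rw [commutator_def, Subgroup.commutator_le]
  rintro ⟨f, hf⟩ - ⟨g, hg⟩ -
  obtain ⟨m, hm⟩ := hslope f hf
  obtain ⟨m', hm'⟩ := hslope g hg
  refine commutatorElement_mem_eventualFixingSubgroup (hm.apply_comm hm') ?_
  obtain ⟨_, hinv⟩ := hslope _ (inv_mem (mul_mem hg hf))
  exact hinv.tendsto

/-- The generator of Thompson's group denoted `A` by Cannon, Floyd and Parry: it has slopes `1/2`,
`1` and `2` on `[0, 1/2]`, `[1/2, 3/4]` and `[3/4, 1]`. -/
noncomputable def thompsonA : Equiv.Perm (Set.Icc (0 : ℝ) 1) where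
  toFun x := ⟨max (x / 2) (max (x - 1 / 4) (2 * x - 1)), by
    have := x.2.1
    exact le_max_of_le_left (by positivity), by
    have := x.2.2
    refine max_le ?_ (max_le ?_ ?_) <;> linarith⟩
  invFun x := ⟨min (2 * x) (min (x + 1 / 4) ((x + 1) / 2)), by
    have := x.2.1
    refine le_min ?_ (le_min ?_ ?_) <;> positivity, by
    have := x.2.2
    exact min_le_of_right_le (min_le_of_right_le (by linarith))⟩
  left_inv x := by
    apply Subtype.ext
    grind
  right_inv x := by
    apply Subtype.ext
    grind

lemma coe_thompsonA (x : Set.Icc (0 : ℝ) 1) :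
    (thompsonA x : ℝ) = max (x / 2 : ℝ) (max (x - 1 / 4) (2 * x - 1)) :=
  rfl

lemma isThompson_thompsonA : IsThompson thompsonA := by
  refine ⟨fun x y hxy => ?_, {1 / 2, 3 / 4}, ?_, fun x y _ hs => ?_⟩
  · have : (x : ℝ) < y := hxy
    simp only [coe_thompsonA]
    exact max_lt_max (by linarith) (max_lt_max (by linarith) (by linarith))
  · simp only [Finset.forall_mem_insert, Finset.mem_singleton, forall_eq]
    exact ⟨⟨1, 1, by norm_num⟩, ⟨3, 2, by norm_num⟩⟩
  · simp only [Finset.forall_mem_insert, Finset.mem_singleton, forall_eq, Set.mem_Ioo, not_and,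
      not_lt] at hs
    obtain ⟨hhalf, hquarter⟩ := hs
    simp only [coe_thompsonA, Set.mem_Icc]
    rcases lt_or_ge (x : ℝ) (1 / 2) with hx | hx
    · exact ⟨-1, fun t ht => by rw [zpow_neg_one]; grind⟩
    rcases lt_or_ge (x : ℝ) (3 / 4) with hx' | hx'
    · exact ⟨0, fun t ht => by rw [zpow_zero]; grind⟩
    · exact ⟨1, fun t ht => by rw [zpow_one]; grind⟩

lemma thompsonA_le (x : Set.Icc (0 : ℝ) 1) : thompsonA x ≤ x := by
  have hx := x.2
  rw [← Subtype.coe_le_coe, coe_thompsonA]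
  refine max_le ?_ (max_le ?_ ?_) <;> linarith [hx.1, hx.2]

lemma eq_bot_or_eq_top_of_thompsonA_eq {x : Set.Icc (0 : ℝ) 1} (hx : thompsonA x = x) :
    x = ⊥ ∨ x = ⊤ := by
  have hx' : max (x / 2 : ℝ) (max (x - 1 / 4) (2 * x - 1)) = x := congrArg Subtype.val hx
  have hor : (x : ℝ) = 0 ∨ (x : ℝ) = 1 := by grind
  exact hor.imp Subtype.ext Subtype.ext

theorem thompsonF_boundedlyAcyclic_general {H : Subgroup (Equiv.Perm (Set.Icc (0 : ℝ) 1))}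
    (hbot : ∀ g ∈ H, ∃ m, HasSlopeNear g ⊥ m) (htop : ∀ g ∈ H, ∃ m, HasSlopeNear g ⊤ m)
    {t : Equiv.Perm (Set.Icc (0 : ℝ) 1)} (htH : t ∈ H) (ht : StrictMono t) (hle : ∀ x, t x ≤ x)
    (hfix : ∀ x, t x = x → x = ⊥ ∨ x = ⊤) : BoundedlyAcyclic H :=
  boundedlyAcyclic_of_commutator_le_eventualFixingSubgroup (t := (⟨t, htH⟩ : H))
    (fun _ hg => eventually_sup.2 ⟨commutator_le_eventualFixingSubgroup hbot hg,
      commutator_le_eventualFixingSubgroup htop hg⟩) ht hle hfix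

end Thompson

/-- Thompson's group `F` (realised as the subgroup of the permutations
of `[0,1]` consisting exactly of the increasing piecewise-affine bijections with dyadic
breakpoints and slopes powers of `2`) is boundedly acyclic. -/
theorem thompsonF_boundedlyAcyclic
    (H : Subgroup (Equiv.Perm ↥(Set.Icc (0 : ℝ) 1)))
    (hH : ∀ f, f ∈ H ↔ IsThompson f) :
    BoundedlyAcyclic H := by
  exact thompsonF_boundedlyAcyclic_general (fun g hg => ((hH g).1 hg).hasSlopeNear_bot)
    (fun g hg => ((hH g).1 hg).hasSlopeNear_top) ((hH _).2 isThompson_thompsonA)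
    isThompson_thompsonA.strictMono thompsonA_le fun _ => eq_bot_or_eq_top_of_thompsonA_eq
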